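/- For every positive integer k: (1) there exists a rational number r such that Z_{SO(6)}(2k, 2k, 2k, 2k, 2k, 2k) = r·π^{12k}; and (2) Z_{SO(6)}(2k, 2k+1, 2k+1, 2k+1, 2k+1, 2k+1) belongs to the ℚ-subalgebra of ℝ generated by the set of Riemann zeta values {ζ(j) : j an integer, j ≥ 2}. -/

import Mathlib

open Complex Real

/-- Generic real triple zeta-sum of type `A₃` with a weight `w` on `(l,m,n)`,
at positive integer arguments. -/
noncomputable def Z3r (w : ℕ → ℕ → ℕ → ℝ) (s₁ s₂ s₃ s₄ s₅ s₆ : ℕ) : ℝ :=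
  ∑' t : ℕ × ℕ × ℕ,
    w (t.1 + 1) (t.2.1 + 1) (t.2.2 + 1) /
      (((t.1 + 1 : ℕ) : ℝ) ^ s₁ * ((t.2.1 + 1 : ℕ) : ℝ) ^ s₂ *
        ((t.2.2 + 1 : ℕ) : ℝ) ^ s₃ * ((t.1 + 1 + (t.2.1 + 1) : ℕ) : ℝ) ^ s₄ *
        ((t.2.1 + 1 + (t.2.2 + 1) : ℕ) : ℝ) ^ s₅ *
        ((t.1 + 1 + (t.2.1 + 1) + (t.2.2 + 1) : ℕ) : ℝ) ^ s₆)

/-- `ζ₃(s₁,…,s₆;SO(6))` at positive integer arguments: the sum is restricted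
to `l ≡ n (mod 2)`. -/
noncomputable def ZSO6r : ℕ → ℕ → ℕ → ℕ → ℕ → ℕ → ℝ :=
  Z3r (fun l _ n => if l % 2 = n % 2 then 1 else 0)

/-- The set of values `ζ(j)` of the Riemann zeta function at integers `j ≥ 2`,
viewed inside `ℝ`. -/
def zetaValues : Set ℝ := {x : ℝ | ∃ j : ℕ, 2 ≤ j ∧ (x : ℂ) = riemannZeta j}

/-!
Consider the sum over all integers `d > 0`, `x`, `y` with `x - y - d` even of the inverse of the
product of the roots of `A₃`, which in these coordinates are `d, x, y, x - y, d - x, d - y` up to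
sign; the root `x - y` carries the exponent `q = 2k`, the others the exponent `p`.

The Weyl chambers with `d > 0` come in pairs exchanged by `x ↔ y`. On each of the six chambers with
`y < x` the summand is, up to sign, that of `ζ₃(p, …, p; SO(6))` times `(x - y) ^ (p - q)`. For
`p = q` the total is therefore `12` times the zeta value. For `p = q + 1` the factors `x - y` add up
with their signs to `l + n`, and by the symmetry `l ↔ n` the total is `4` times the zeta value.

On the other hand, partial fractions in `x` and in `y` turn the sum over `x, y` for fixed `d` into
triple convolutions of functions `εᵘ u⁻ʳ`, which by Euler's evaluation of `ζ(2k)` are rational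
combinations of `π²ᵃ (±1)ᵈ d⁻ᵇ`. Summing over `d` leaves rational combinations of the `π²ᵃ ζ(b)`
whose weight `2a + b` is the sum `q + 5p` of the exponents. If this weight is even, so is `b`, and
`ζ(b)` is a rational multiple of `πᵇ`.
-/

open SummationFilter Filter Topology

lemma hasSum_congr_of_eq {α β : Type*} [AddCommMonoid α] [TopologicalSpace α]
    {L : SummationFilter β} {f g : β → α} {a b : α} (h : HasSum f a L) (hfg : ∀ x, g x = f x)
    (hab : b = a) : HasSum g b L :=
  hab ▸ h.congr_fun hfg

section SymmetricSums

variable {α : Type*} [AddCommGroup α] [TopologicalSpace α] {f : ℤ → α} {c : α}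

lemma hasSum_symmetricIcc_comp_neg (h : HasSum f c (symmetricIcc ℤ)) :
    HasSum (fun x ↦ f (-x)) c (symmetricIcc ℤ) := by
  rw [hasSum_symmetricIcc_iff] at h ⊢
  refine h.congr fun N ↦ Finset.sum_equiv (Equiv.neg ℤ) (fun x ↦ ?_) (by simp)
  simp only [Finset.mem_Icc, Equiv.neg_apply]
  omega

lemma hasSum_symmetricIcc_of_odd [IsAddTorsionFree α] (hf : f.Odd) :
    HasSum f 0 (symmetricIcc ℤ) := by
  rw [hasSum_symmetricIcc_iff]
  have sum_eq_zero (N : ℕ) : ∑ n ∈ Finset.Icc (-(N : ℤ)) N, f n = 0 := by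
    rw [← self_eq_neg, ← Finset.sum_neg_distrib]
    refine Finset.sum_equiv (Equiv.neg ℤ) (fun x ↦ ?_) (by simp [hf _])
    simp only [Finset.mem_Icc, Equiv.neg_apply]
    omega
  simpa only [sum_eq_zero] using tendsto_const_nhds

variable [IsTopologicalAddGroup α]

lemma hasSum_symmetricIcc_of_even (hf : f.Even) (h : HasSum (fun n : ℕ ↦ f n) c) :
    HasSum f (c + c - f 0) (symmetricIcc ℤ) :=
  (h.of_nat_of_neg (h.congr_fun fun n ↦ hf n)).mono_left (symmetricIcc ℤ).le_atTop

lemma hasSum_symmetricIcc_succ_sub (hf : Tendsto f cofinite (𝓝 0)) :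
    HasSum (fun x ↦ f (x + 1) - f x) 0 (symmetricIcc ℤ) := by
  rw [hasSum_symmetricIcc_iff]
  have telescope (N : ℕ) :
      ∑ n ∈ Finset.Icc (-(N : ℤ)) N, (f (n + 1) - f n) = f (N + 1) - f (-N) := by
    have h := Finset.sum_Ico_int_sub N f
    rw [Finset.sum_Icc_eq_sum_Ico_add _ (by omega), ← neg_inj, neg_add, ← Finset.sum_neg_distrib]
    simp only [neg_sub, h]
    abel
  have tendsto_comp {u : ℕ → ℤ} (hu : u.Injective) : Tendsto (f ∘ u) atTop (𝓝 0) :=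
    hf.comp (Nat.cofinite_eq_atTop ▸ hu.tendsto_cofinite)
  simp_rw [telescope]
  simpa using (tendsto_comp (u := fun N ↦ N + 1) fun a b h ↦ by simpa using h).sub
    (tendsto_comp (u := fun N ↦ -N) fun a b h ↦ by simpa using h)

lemma hasSum_symmetricIcc_comp_add (hf : Tendsto f cofinite (𝓝 0))
    (h : HasSum f c (symmetricIcc ℤ)) (n : ℤ) :
    HasSum (fun x ↦ f (x + n)) c (symmetricIcc ℤ) := by
  have step (k : ℤ) : HasSum (fun x ↦ f (x + (k + 1)) - f (x + k)) 0 (symmetricIcc ℤ) := by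
    refine (hasSum_symmetricIcc_succ_sub
      (hf.comp (add_left_injective k).tendsto_cofinite)).congr_fun fun x ↦ ?_
    simp only [Function.comp_apply, add_assoc, add_comm 1 k]
  induction n with
  | zero => simpa using h
  | succ k ih => simpa using ih.add (step k)
  | pred k ih => simpa using ih.sub (step (-k - 1))

lemma hasSum_symmetricIcc_comp_sub_left (hf : Tendsto f cofinite (𝓝 0))
    (h : HasSum f c (symmetricIcc ℤ)) (n : ℤ) :
    HasSum (fun x ↦ f (n - x)) c (symmetricIcc ℤ) := by
  simpa only [neg_add_eq_sub] using
    hasSum_symmetricIcc_comp_neg (hasSum_symmetricIcc_comp_add hf h n)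

end SymmetricSums

section SumsInto

variable {R X β : Type*} [Semiring R] [AddCommMonoid X] [Module R X] [TopologicalSpace X]
  [ContinuousAdd X] [ContinuousConstSMul R X]

/-- The families indexed by `β` that sum, along the summation filter `L`, to an element of the
submodule `V`. -/
def sumsInto (L : SummationFilter β) (V : Submodule R X) : Submodule R (β → X) where
  carrier := {F | ∃ g ∈ V, HasSum F g L}
  zero_mem' := ⟨0, V.zero_mem, hasSum_zero⟩
  add_mem' := fun ⟨g, hg, hF⟩ ⟨g', hg', hF'⟩ ↦ ⟨g + g', V.add_mem hg hg', hF.add hF'⟩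
  smul_mem' := fun r _ ⟨g, hg, hF⟩ ↦ ⟨r • g, V.smul_mem r hg, hF.const_smul r⟩

end SumsInto

/-- `x⁻ʳ`, with value `0` at `x = 0` when `r ≥ 1`, and with `x⁻⁰` read as the delta function at `0`.
Up to a factor these are the Fourier coefficients of the Bernoulli polynomials; the delta function
supplies the correction terms of partial fraction expansions at their poles. -/
noncomputable def invPow (r : ℕ) (x : ℤ) : ℝ :=
  if r = 0 then (if x = 0 then 1 else 0) else (x : ℝ)⁻¹ ^ r

section InvPow

variable {r s : ℕ}

lemma invPow_zero (x : ℤ) : invPow 0 x = if x = 0 then 1 else 0 := by simp [invPow]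

lemma invPow_of_ne_zero (hr : r ≠ 0) (x : ℤ) : invPow r x = (x : ℝ)⁻¹ ^ r := by simp [invPow, hr]

lemma invPow_apply_zero (hr : r ≠ 0) : invPow r 0 = 0 := by simp [invPow, hr]

lemma invPow_mul_invPow (hr : r ≠ 0) (hs : s ≠ 0) (x : ℤ) :
    invPow r x * invPow s x = invPow (r + s) x := by
  simp only [invPow_of_ne_zero, hr, hs, ne_eq, Nat.add_eq_zero_iff, false_and, not_false_eq_true,
    pow_add]

lemma invPow_mul (hr : r ≠ 0) (x y : ℤ) : invPow r (x * y) = invPow r x * invPow r y := by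
  simp only [invPow_of_ne_zero hr, Int.cast_mul, mul_inv, mul_pow]

lemma invPow_neg (r : ℕ) (x : ℤ) : invPow r (-x) = (-1) ^ r * invPow r x := by
  rcases eq_or_ne r 0 with rfl | hr
  · simp [invPow_zero]
  · rw [← neg_one_mul, invPow_mul hr, invPow_of_ne_zero hr]
    norm_num

lemma invPow_eq_pow_mul (hr : r ≠ 0) (e : ℕ) (x : ℤ) : invPow r x = x ^ e * invPow (r + e) x := by
  rw [invPow_of_ne_zero hr, invPow_of_ne_zero (by omega)]
  rcases eq_or_ne x 0 with rfl | hx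
  · simp [hr]
  · simp only [pow_add, inv_pow]
    field_simp

lemma abs_intCast_inv_le_one (x : ℤ) : |(x : ℝ)⁻¹| ≤ 1 := by
  rcases eq_or_ne x 0 with rfl | hx
  · simp
  · rw [abs_inv]
    exact inv_le_one_of_one_le₀ (by exact_mod_cast Int.one_le_abs hx)

lemma abs_invPow_le_one (r : ℕ) (x : ℤ) : |invPow r x| ≤ 1 := by
  unfold invPow
  split_ifs
  · simp
  · simp
  · simpa only [abs_pow] using pow_le_one₀ (abs_nonneg _) (abs_intCast_inv_le_one x)

lemma invPow_two_nonneg (x : ℤ) : 0 ≤ invPow 2 x := by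
  rw [invPow_of_ne_zero two_ne_zero]
  positivity

lemma abs_invPow_le_invPow_two (hr : 2 ≤ r) (x : ℤ) : |invPow r x| ≤ invPow 2 x := by
  rw [invPow_of_ne_zero (by omega), invPow_of_ne_zero two_ne_zero, abs_pow, ← sq_abs]
  exact pow_le_pow_of_le_one (abs_nonneg _) (abs_intCast_inv_le_one x) hr

lemma summable_invPow_two : Summable (invPow 2) :=
  (Real.summable_one_div_int_pow.2 one_lt_two).congr fun x ↦ by
    simp [invPow_of_ne_zero two_ne_zero]

lemma summable_invPow (hr : 2 ≤ r) : Summable (invPow r) :=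
  .of_norm_bounded summable_invPow_two (abs_invPow_le_invPow_two hr)

lemma summable_invPow_sq (r : ℕ) : Summable (fun x ↦ invPow r x ^ 2) := by
  rcases eq_or_ne r 0 with rfl | hr
  · exact summable_of_ne_finset_zero (s := {0}) fun x hx ↦ by
      simp [invPow_zero, Finset.notMem_singleton.1 hx]
  · simpa only [sq, invPow_mul_invPow hr hr] using summable_invPow (r := r + r) (by omega)

lemma summable_mul_of_summable_sq {ι : Type*} {f g : ι → ℝ} (hf : Summable (fun i ↦ f i ^ 2))
    (hg : Summable (fun i ↦ g i ^ 2)) : Summable (fun i ↦ f i * g i) :=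
  .of_norm_bounded (hf.add hg) fun i ↦ by
    rw [Real.norm_eq_abs, abs_le]
    constructor <;> nlinarith [sq_nonneg (f i + g i), sq_nonneg (f i - g i)]

end InvPow

/-- The character `x ↦ εˣ` of `ℤ` with values in `ℝ`, for a sign `ε`. -/
noncomputable def signPow (ε : ℤˣ) (x : ℤ) : ℝ := ((ε ^ x : ℤˣ) : ℤ)

section SignPow

variable (ε δ : ℤˣ) (x y : ℤ)

lemma signPow_one : signPow 1 x = 1 := by simp [signPow]

lemma signPow_zero : signPow ε 0 = 1 := by simp [signPow]

lemma signPow_add : signPow ε (x + y) = signPow ε x * signPow ε y := by simp [signPow, zpow_add]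

lemma signPow_neg : signPow ε (-x) = signPow ε x := by simp [signPow, zpow_neg]

lemma signPow_sub : signPow ε (x - y) = signPow ε x * signPow ε y := by
  rw [sub_eq_add_neg, signPow_add, signPow_neg]

lemma mul_signPow : signPow (ε * δ) x = signPow ε x * signPow δ x := by simp [signPow, mul_zpow]

lemma signPow_mul : signPow ε (x * y) = signPow (ε ^ x) y := by simp [signPow, zpow_mul]

lemma signPow_mul_self : signPow ε x * signPow ε x = 1 := by
  rw [← signPow_sub, sub_self, signPow_zero]

lemma abs_signPow : |signPow ε x| = 1 := by
  rcases Int.units_eq_one_or (ε ^ x) with h | h <;> simp [signPow, h]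

lemma signPow_neg_one : signPow (-1) x = if Even x then 1 else -1 := by
  split_ifs with h
  · simp [signPow, h.neg_one_zpow]
  · simp [signPow, (Int.not_even_iff_odd.1 h).neg_one_zpow]

end SignPow

/-- The real functions on `ℤ` of weight `w`: the rational combinations of `π²ᵃ εⁿ n⁻ᵇ` with
`2a + b = w`. Such functions arise as sums over `ℤ` of products of `w` inverted linear forms. -/
noncomputable def coeffSpace (w : ℕ) : Submodule ℚ (ℤ → ℝ) :=
  Submodule.span ℚ {f | ∃ (ε : ℤˣ) (a b : ℕ), 2 * a + b = w ∧
    f = fun n ↦ π ^ (2 * a) * (signPow ε n * invPow b n)}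

section CoeffSpace

variable {w : ℕ} {f : ℤ → ℝ}

lemma pi_pow_mul_signPow_mul_invPow_mem_coeffSpace (ε : ℤˣ) {a b : ℕ} (h : 2 * a + b = w) :
    (fun n ↦ π ^ (2 * a) * (signPow ε n * invPow b n)) ∈ coeffSpace w :=
  Submodule.subset_span ⟨ε, a, b, h, rfl⟩

lemma pi_pow_mul_signPow_mul_mem_coeffSpace (hf : f ∈ coeffSpace w) (δ : ℤˣ) (c : ℕ) :
    (fun n ↦ π ^ (2 * c) * (signPow δ n * f n)) ∈ coeffSpace (2 * c + w) := by
  suffices coeffSpace w ≤ (coeffSpace (2 * c + w)).comap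
      (LinearMap.mulLeft ℚ fun n ↦ π ^ (2 * c) * signPow δ n) by
    simpa only [Submodule.mem_comap, LinearMap.mulLeft_apply, Pi.mul_def, mul_assoc] using this hf
  refine Submodule.span_le.2 ?_
  rintro _ ⟨ε, a, b, rfl, rfl⟩
  refine Submodule.subset_span ⟨δ * ε, c + a, b, by ring, funext fun n ↦ ?_⟩
  simp only [LinearMap.mulLeft_apply, Pi.mul_apply, mul_signPow]
  ring

lemma signPow_mul_mem_coeffSpace (hf : f ∈ coeffSpace w) (δ : ℤˣ) :
    (fun n ↦ signPow δ n * f n) ∈ coeffSpace w := by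
  simpa using pi_pow_mul_signPow_mul_mem_coeffSpace hf δ 0

lemma invPow_mul_comp_mul_mem_coeffSpace (hf : f ∈ coeffSpace w) {c : ℕ} (hc : c ≠ 0) (k : ℤ) :
    (fun n ↦ invPow c n * f (k * n)) ∈ coeffSpace (c + w) := by
  suffices coeffSpace w ≤ (coeffSpace (c + w)).comap
      (LinearMap.mulLeft ℚ (invPow c) ∘ₗ LinearMap.funLeft ℚ ℝ (k * ·)) from this hf
  refine Submodule.span_le.2 ?_
  rintro _ ⟨ε, a, b, rfl, rfl⟩
  have generator (δ : ℤˣ) (d : ℕ) (hd : d = c + b) (q : ℚ)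
      (h : ∀ n, invPow c n * (signPow ε (k * n) * invPow b (k * n)) =
        q * (signPow δ n * invPow d n)) :
      (fun n ↦ invPow c n * (π ^ (2 * a) * (signPow ε (k * n) * invPow b (k * n)))) ∈
        coeffSpace (c + (2 * a + b)) := by
    convert (coeffSpace (c + (2 * a + b))).smul_mem q
      (pi_pow_mul_signPow_mul_invPow_mem_coeffSpace δ (a := a) (b := d) (by omega)) using 1
    ext n
    rw [Pi.smul_apply, Rat.smul_def, mul_left_comm, h, mul_left_comm]
  rcases eq_or_ne b 0 with rfl | hb
  · refine generator 1 c rfl (if k = 0 then 1 else 0) fun n ↦ ?_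
    rcases eq_or_ne k 0 with rfl | hk
    · simp [signPow_zero, signPow_one, invPow_zero]
    · rcases eq_or_ne n 0 with rfl | hn <;> simp [invPow_zero, invPow_apply_zero, *]
  · refine generator (ε ^ k) (c + b) rfl ((k : ℚ)⁻¹ ^ b) fun n ↦ ?_
    rw [signPow_mul, invPow_mul hb, ← invPow_mul_invPow hc hb, invPow_of_ne_zero hb k]
    push_cast
    ring

end CoeffSpace

section Zeta

variable {r : ℕ}

lemma riemannZeta_natCast_eq_ofReal_tsum (hr : 2 ≤ r) :
    riemannZeta r = ((∑' n : ℕ, invPow r n : ℝ) : ℂ) := by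
  rw [zeta_nat_eq_tsum_of_gt_one hr, Complex.ofReal_tsum]
  exact tsum_congr fun n ↦ by simp [invPow_of_ne_zero (show r ≠ 0 by omega)]

lemma ofReal_re_riemannZeta_natCast (hr : 2 ≤ r) : ((riemannZeta r).re : ℂ) = riemannZeta r := by
  rw [riemannZeta_natCast_eq_ofReal_tsum hr, ofReal_re]

lemma hasSum_invPow_natCast (hr : 2 ≤ r) :
    HasSum (fun n : ℕ ↦ invPow r n) (riemannZeta r).re := by
  rw [riemannZeta_natCast_eq_ofReal_tsum hr, ofReal_re]
  exact ((summable_invPow hr).comp_injective Nat.cast_injective).hasSum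

lemma exists_re_riemannZeta_two_mul_eq {k : ℕ} (hk : k ≠ 0) :
    ∃ q : ℚ, (riemannZeta (2 * k : ℕ)).re = q * π ^ (2 * k) := by
  refine ⟨(-1) ^ (k + 1) * 2 ^ (2 * k - 1) * bernoulli (2 * k) / (2 * k).factorial, ?_⟩
  have closed_form := (hasSum_zeta_nat hk).congr_fun fun n ↦
    show invPow (2 * k) n = _ by simp [invPow_of_ne_zero (show 2 * k ≠ 0 by omega)]
  rw [(hasSum_invPow_natCast (by omega)).unique closed_form]
  push_cast
  ring

lemma exists_hasSum_signPow_mul_invPow_natCast (ε : ℤˣ) (hr : 2 ≤ r) :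
    ∃ q : ℚ, HasSum (fun n : ℕ ↦ signPow ε n * invPow r n) (q * (riemannZeta r).re) := by
  have zeta_sum := hasSum_invPow_natCast hr
  rcases Int.units_eq_one_or ε with rfl | rfl
  · exact ⟨1, by simpa [signPow_one] using zeta_sum⟩
  · have even_sum : HasSum (fun n : ℕ ↦ if Even n then invPow r n else 0)
        (invPow r 2 * (riemannZeta r).re) := by
      refine ((mul_right_injective₀ two_ne_zero).hasSum_iff fun n hn ↦ if_neg ?_).1 <|
        (zeta_sum.mul_left _).congr_fun fun n ↦ ?_
      · rintro ⟨m, rfl⟩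
        exact hn ⟨m, two_mul m⟩
      · simp [invPow_mul (show r ≠ 0 by omega)]
    refine ⟨2 * 2⁻¹ ^ r - 1, ?_⟩
    refine hasSum_congr_of_eq ((even_sum.mul_left 2).sub zeta_sum) (fun n ↦ ?_) ?_
    · simp only [signPow_neg_one, Int.even_coe_nat]
      split_ifs <;> ring
    · rw [invPow_of_ne_zero (by omega)]
      push_cast
      ring

/-- Euler's evaluation of `ζ(2k)`: the membership of `c • invPow 0` says that `c` is a rational
multiple of `πʳ`, and `0` for odd `r`. -/
lemma exists_hasSum_signPow_mul_invPow (ε : ℤˣ) (r : ℕ) : ∃ c : ℝ, c • invPow 0 ∈ coeffSpace r ∧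
    HasSum (fun x ↦ signPow ε x * invPow r x) c (symmetricIcc ℤ) := by
  rcases r.even_or_odd' with ⟨k, rfl | rfl⟩
  · rcases eq_or_ne k 0 with rfl | hk
    · refine ⟨1, ?_, ?_⟩
      · simpa [signPow_one, Pi.smul_def] using
          pi_pow_mul_signPow_mul_invPow_mem_coeffSpace 1 (a := 0) (b := 0) rfl
      · convert hasSum_single (L := symmetricIcc ℤ) 0 fun x hx ↦ ?_
        · simp [signPow_zero, invPow_zero]
        · simp [invPow_zero, hx]
    obtain ⟨q, half_sum⟩ := exists_hasSum_signPow_mul_invPow_natCast ε (r := 2 * k) (by omega)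
    obtain ⟨q', hq'⟩ := exists_re_riemannZeta_two_mul_eq hk
    refine ⟨2 * q * q' * π ^ (2 * k), ?_, ?_⟩
    · convert (coeffSpace (2 * k)).smul_mem (2 * q * q')
        (pi_pow_mul_signPow_mul_invPow_mem_coeffSpace 1 (a := k) (b := 0) rfl) using 1
      ext n
      simp [signPow_one, Rat.smul_def, mul_assoc]
    · rw [hq'] at half_sum
      refine hasSum_congr_of_eq (hasSum_symmetricIcc_of_even
        (f := fun x ↦ signPow ε x * invPow (2 * k) x) (fun x ↦ ?_) half_sum) (fun x ↦ rfl) ?_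
      · simp [signPow_neg, invPow_neg]
      · rw [invPow_apply_zero (by omega)]
        ring
  · refine ⟨0, by simp, hasSum_symmetricIcc_of_odd fun x ↦ ?_⟩
    simp [signPow_neg, invPow_neg, (odd_two_mul_add_one k).neg_one_pow]

lemma tendsto_signPow_mul_invPow_cofinite (ε : ℤˣ) (r : ℕ) :
    Tendsto (fun x ↦ signPow ε x * invPow r x) cofinite (𝓝 0) := by
  have sq_tendsto := (summable_invPow_sq r).tendsto_cofinite_zero
  refine squeeze_zero_norm (fun x ↦ ?_) (by simpa using sq_tendsto.sqrt)
  rw [Real.norm_eq_abs, abs_mul, abs_signPow, one_mul, Real.sqrt_sq_eq_abs]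

end Zeta

/-- The kernels of weight `w`: the rational combinations of the functions
`(x, n) ↦ n⁻ᵃ (cn - x)⁻ʳ` with `a ≥ 1`, `c ∈ ℤ` and `a + r = w`. They are the terms of the partial
fraction expansions in `x`. -/
noncomputable def kernelSpace (w : ℕ) : Submodule ℚ (ℤ → ℤ → ℝ) :=
  Submodule.span ℚ {F | ∃ (a r : ℕ) (c : ℤ), a ≠ 0 ∧ a + r = w ∧
    F = fun x n ↦ invPow a n * invPow r (c * n - x)}

/-- `x⁻ʳ` for `x ≠ 0`, and `0` at `x = 0`, also for `r = 0`. Unlike `invPow` it satisfies the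
recursion for partial fractions without boundary terms. -/
noncomputable def puncturedInvPow (r : ℕ) (x : ℤ) : ℝ := if x = 0 then 0 else (x : ℝ)⁻¹ ^ r

section PartialFractions

variable {a r w : ℕ}

lemma invPow_mul_invPow_sub_mem_kernelSpace (ha : a ≠ 0) (h : a + r = w) :
    (fun x n ↦ invPow a n * invPow r (n - x)) ∈ kernelSpace w :=
  Submodule.subset_span ⟨a, r, 1, ha, h, by simp only [one_mul]⟩

lemma invPow_mul_invPow_mem_kernelSpace (ha : a ≠ 0) (h : a + r = w) :
    (fun x n ↦ invPow a n * invPow r x) ∈ kernelSpace w := by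
  convert (kernelSpace w).smul_mem ((-1) ^ r)
    (Submodule.subset_span ⟨a, r, 0, ha, h, rfl⟩) using 1
  ext x n
  simp only [zero_mul, zero_sub, invPow_neg, Pi.smul_apply, Rat.smul_def, Rat.cast_pow,
    Rat.cast_neg, Rat.cast_one]
  rw [mul_left_comm, ← mul_assoc ((-1) ^ r), ← mul_pow]
  simp

lemma puncturedInvPow_of_ne_zero (hr : r ≠ 0) (x : ℤ) : puncturedInvPow r x = invPow r x := by
  rw [puncturedInvPow, invPow_of_ne_zero hr]
  split_ifs with hx <;> simp [hx, hr]

lemma puncturedInvPow_zero (x : ℤ) : puncturedInvPow 0 x = 1 - invPow 0 x := by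
  simp only [puncturedInvPow, invPow_zero, pow_zero]
  split_ifs <;> simp

lemma puncturedInvPow_succ_mul_succ (i j : ℕ) {n : ℤ} (hn : n ≠ 0) (x : ℤ) :
    puncturedInvPow (i + 1) x * puncturedInvPow (j + 1) (n - x) = invPow 1 n *
      (puncturedInvPow i x * puncturedInvPow (j + 1) (n - x) +
        puncturedInvPow (i + 1) x * puncturedInvPow j (n - x)) := by
  rw [invPow_of_ne_zero one_ne_zero]
  unfold puncturedInvPow
  rcases eq_or_ne x 0 with rfl | hx
  · simp
  rcases eq_or_ne (n - x) 0 with hnx | hnx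
  · simp [hnx]
  · have hx' : (x : ℝ) ≠ 0 := by exact_mod_cast hx
    have hnx' : (n - x : ℝ) ≠ 0 := by exact_mod_cast hnx
    have hn' : (n : ℝ) ≠ 0 := by exact_mod_cast hn
    simp only [hx, hnx, if_false, Int.cast_sub, inv_pow, pow_succ]
    field_simp
    ring

lemma invPow_mul_puncturedInvPow_mul_mem_kernelSpace (i j : ℕ) (hij : i ≠ 0 ∨ j ≠ 0) {a : ℕ}
    (ha : a ≠ 0) (h : a + i + j = w) :
    (fun x n ↦ invPow a n * (puncturedInvPow i x * puncturedInvPow j (n - x))) ∈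
      kernelSpace w := by
  match i, j with
  | 0, 0 => simp at hij
  | 0, j + 1 =>
    convert (kernelSpace w).sub_mem
      (invPow_mul_invPow_sub_mem_kernelSpace (r := j + 1) ha (by omega))
      (invPow_mul_invPow_mem_kernelSpace (a := a + (j + 1)) (r := 0) (by omega) (by omega)) using 1
    ext x n
    rw [puncturedInvPow_zero, puncturedInvPow_of_ne_zero (by omega), Pi.sub_apply, Pi.sub_apply,
      ← invPow_mul_invPow ha (by omega), invPow_zero]
    split_ifs with hx
    · simp [hx]
    · simp
  | i + 1, 0 =>
    convert (kernelSpace w).sub_mem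
      (invPow_mul_invPow_mem_kernelSpace (r := i + 1) ha (by omega))
      (invPow_mul_invPow_sub_mem_kernelSpace (a := a + (i + 1)) (r := 0) (by omega) (by omega))
      using 1
    ext x n
    rw [puncturedInvPow_zero, puncturedInvPow_of_ne_zero (by omega), Pi.sub_apply, Pi.sub_apply,
      ← invPow_mul_invPow ha (by omega), invPow_zero]
    split_ifs with hx
    · simp [sub_eq_zero.1 hx]
    · simp
  | i + 1, j + 1 =>
    convert (kernelSpace w).add_mem
      (invPow_mul_puncturedInvPow_mul_mem_kernelSpace (a := a + 1) i (j + 1) (by omega) (by omega)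
        (by omega))
      (invPow_mul_puncturedInvPow_mul_mem_kernelSpace (a := a + 1) (i + 1) j (by omega) (by omega)
        (by omega)) using 1
    ext x n
    rcases eq_or_ne n 0 with rfl | hn
    · simp [invPow_apply_zero, ha]
    · rw [puncturedInvPow_succ_mul_succ i j hn, Pi.add_apply, Pi.add_apply,
        ← invPow_mul_invPow ha one_ne_zero]
      ring

lemma ite_invPow_mul_invPow_sub_mem_kernelSpace {i j : ℕ} (hi : i ≠ 0) (hj : j ≠ 0) :
    (fun x n ↦ if n = 0 then 0 else invPow i x * invPow j (n - x)) ∈ kernelSpace (i + j) := by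
  obtain ⟨i, rfl⟩ := Nat.exists_eq_succ_of_ne_zero hi
  obtain ⟨j, rfl⟩ := Nat.exists_eq_succ_of_ne_zero hj
  convert (kernelSpace (i + 1 + (j + 1))).add_mem
    (invPow_mul_puncturedInvPow_mul_mem_kernelSpace i (j + 1) (.inr hj) one_ne_zero (by omega))
    (invPow_mul_puncturedInvPow_mul_mem_kernelSpace (i + 1) j (.inl hi) one_ne_zero (by omega))
    using 1
  ext x n
  split_ifs with hn
  · simp [hn, invPow_apply_zero]
  · rw [← puncturedInvPow_of_ne_zero hi, ← puncturedInvPow_of_ne_zero hj,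
      puncturedInvPow_succ_mul_succ i j hn, mul_add]
    rfl

end PartialFractions

section Convolution

variable {v w : ℕ}

lemma signPow_mul_mem_sumsInto (ε : ℤˣ) {F : ℤ → ℤ → ℝ} (hF : F ∈ kernelSpace w) :
    (fun x n ↦ signPow ε x * F x n) ∈ sumsInto (symmetricIcc ℤ) (coeffSpace w) := by
  suffices kernelSpace w ≤ (sumsInto (symmetricIcc ℤ) (coeffSpace w)).comap
      (LinearMap.mulLeft ℚ fun x _ ↦ signPow ε x) from this hF
  refine Submodule.span_le.2 ?_
  rintro _ ⟨a, r, k, ha, rfl, rfl⟩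
  obtain ⟨c, hc, hsum⟩ := exists_hasSum_signPow_mul_invPow ε r
  refine ⟨_, signPow_mul_mem_coeffSpace (invPow_mul_comp_mul_mem_coeffSpace hc ha 0) (ε ^ k),
    Pi.hasSum.2 fun n ↦ ?_⟩
  refine hasSum_congr_of_eq ((hasSum_symmetricIcc_comp_sub_left
    (tendsto_signPow_mul_invPow_cofinite ε r) hsum (k * n)).mul_left
      (signPow (ε ^ k) n * invPow a n)) (fun x ↦ ?_) ?_
  · simp only [LinearMap.mulLeft_apply, Pi.mul_apply, signPow_sub, signPow_mul]
    linear_combination -(signPow ε x * invPow a n * invPow r (k * n - x)) *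
      signPow_mul_self (ε ^ k) n
  · simp [invPow_zero, mul_assoc]

lemma summable_signPow_mul_invPow_mul_invPow_sub (ε : ℤˣ) (i j : ℕ) (n : ℤ) :
    Summable fun x ↦ signPow ε x * (invPow i x * invPow j (n - x)) := by
  refine .of_norm_bounded (summable_mul_of_summable_sq (summable_invPow_sq i)
    ((summable_invPow_sq j).comp_injective (sub_right_injective (b := n)))).abs fun x ↦ ?_
  rw [Real.norm_eq_abs, abs_mul, abs_signPow, one_mul]

lemma mem_sumsInto_unconditional_of_summable {R X β : Type*} [Semiring R] [AddCommMonoid X]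
    [Module R X] [TopologicalSpace X] [ContinuousAdd X] [ContinuousConstSMul R X] [T2Space X]
    {L : SummationFilter β} [L.NeBot] [L.LeAtTop] {V : Submodule R X} {F : β → X}
    (hF : Summable F) (h : F ∈ sumsInto L V) : F ∈ sumsInto (unconditional β) V := by
  obtain ⟨g, hg, hsum⟩ := h
  exact ⟨g, hg, HasSum.unique (hF.hasSum.mono_left L.le_atTop) hsum ▸ hF.hasSum⟩

lemma signPow_mul_invPow_mul_invPow_sub_mem_sumsInto (ε : ℤˣ) (i j : ℕ) :
    (fun x n ↦ signPow ε x * (invPow i x * invPow j (n - x))) ∈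
      sumsInto (unconditional ℤ) (coeffSpace (i + j)) := by
  rcases eq_or_ne i 0 with rfl | hi
  · refine ⟨invPow j, ?_, Pi.hasSum.2 fun n ↦ ?_⟩
    · simpa [signPow_one] using
        pi_pow_mul_signPow_mul_invPow_mem_coeffSpace 1 (a := 0) (b := j) (by omega)
    · refine hasSum_congr_of_eq (hasSum_single (0 : ℤ) fun x hx ↦ ?_) (fun x ↦ rfl) ?_
      · simp [invPow_zero, hx]
      · simp [signPow_zero, invPow_zero]
  rcases eq_or_ne j 0 with rfl | hj
  · refine ⟨fun n ↦ signPow ε n * invPow i n, ?_, Pi.hasSum.2 fun n ↦ ?_⟩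
    · simpa using pi_pow_mul_signPow_mul_invPow_mem_coeffSpace ε (a := 0) (b := i) (by omega)
    · refine hasSum_congr_of_eq (hasSum_single n fun x hx ↦ ?_) (fun x ↦ rfl) ?_
      · simp [invPow_zero, sub_eq_zero, hx.symm]
      · simp [invPow_zero]
  refine mem_sumsInto_unconditional_of_summable (L := symmetricIcc ℤ)
    (Pi.summable.2 fun n ↦ summable_signPow_mul_invPow_mul_invPow_sub ε i j n) ?_
  obtain ⟨c, hc, hsum⟩ := exists_hasSum_signPow_mul_invPow ε (i + j)
  have at_zero : (fun x n ↦ (-1) ^ j * invPow 0 n * (signPow ε x * invPow (i + j) x)) ∈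
      sumsInto (symmetricIcc ℤ) (coeffSpace (i + j)) := by
    refine ⟨_, (coeffSpace (i + j)).smul_mem ((-1) ^ j) hc, Pi.hasSum.2 fun n ↦ ?_⟩
    refine hasSum_congr_of_eq (hsum.mul_left ((-1) ^ j * invPow 0 n)) (fun x ↦ rfl) ?_
    simp only [Pi.smul_apply, smul_eq_mul, Rat.smul_def, Rat.cast_pow, Rat.cast_neg, Rat.cast_one]
    ring
  convert add_mem (signPow_mul_mem_sumsInto ε (ite_invPow_mul_invPow_sub_mem_kernelSpace hi hj))
    at_zero using 1
  ext x n
  simp only [Pi.add_apply, invPow_zero]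
  split_ifs with hn
  · rw [hn, zero_sub, invPow_neg, ← invPow_mul_invPow hi hj]
    ring
  · ring

lemma invPow_mul_comp_sub_mem_sumsInto (j : ℕ) {f : ℤ → ℝ} (hf : f ∈ coeffSpace v) :
    (fun y n ↦ invPow j y * f (n - y)) ∈ sumsInto (unconditional ℤ) (coeffSpace (j + v)) := by
  suffices coeffSpace v ≤ (sumsInto (unconditional ℤ) (coeffSpace (j + v))).comap
      (LinearMap.pi fun y ↦ invPow j y • LinearMap.funLeft ℚ ℝ (· - y)) from this hf
  refine Submodule.span_le.2 ?_
  rintro _ ⟨ε, a, b, rfl, rfl⟩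
  obtain ⟨g, hg, hsum⟩ := signPow_mul_invPow_mul_invPow_sub_mem_sumsInto ε j b
  refine ⟨_, by
    convert pi_pow_mul_signPow_mul_mem_coeffSpace hg ε a using 2
    ring, Pi.hasSum.2 fun n ↦ ?_⟩
  refine hasSum_congr_of_eq ((Pi.hasSum.1 hsum n).mul_left (π ^ (2 * a) * signPow ε n))
    (fun y ↦ ?_) ?_
  · simp only [LinearMap.pi_apply, LinearMap.smul_apply, Pi.smul_apply, LinearMap.funLeft_apply,
      signPow_sub, smul_eq_mul]
    ring
  · ring

lemma summable_signPow_mul_invPow_sub_sub_mul (ε : ℤˣ) {q : ℕ} (hq : 2 ≤ q) (i j : ℕ) (n : ℤ) :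
    Summable fun z : ℤ × ℤ ↦ signPow ε (n - z.1 - z.2) * invPow q (n - z.1 - z.2) *
      (invPow i z.1 * invPow j z.2) := by
  have dominating {k : ℕ} {u : ℤ × ℤ → ℤ × ℤ} (hu : u.Injective) :
      Summable fun z ↦ invPow 2 (u z).1 * invPow k (u z).2 ^ 2 :=
    (summable_invPow_two.mul_of_nonneg (summable_invPow_sq k) invPow_two_nonneg
      fun x ↦ sq_nonneg _).comp_injective hu
  refine .of_norm_bounded ((dominating (k := i) (u := fun z ↦ (n - z.1 - z.2, z.1)) ?_).add
    (dominating (k := j) (u := fun z ↦ (n - z.1 - z.2, z.2)) ?_)) fun z ↦ ?_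
  · rintro ⟨x, y⟩ ⟨x', y'⟩ h
    simp only [Prod.mk.injEq] at h ⊢
    omega
  · rintro ⟨x, y⟩ ⟨x', y'⟩ h
    simp only [Prod.mk.injEq] at h ⊢
    omega
  · rw [Real.norm_eq_abs, abs_mul, abs_mul, abs_signPow, one_mul, ← mul_add]
    refine mul_le_mul (abs_invPow_le_invPow_two hq _) ?_ (abs_nonneg _) (invPow_two_nonneg _)
    rw [abs_le]
    constructor <;> nlinarith [sq_nonneg (invPow i z.1 + invPow j z.2),
      sq_nonneg (invPow i z.1 - invPow j z.2)]

lemma signPow_mul_invPow_sub_sub_mul_mem_sumsInto (ε : ℤˣ) {q : ℕ} (hq : 2 ≤ q) (i j : ℕ) :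
    (fun (z : ℤ × ℤ) n ↦ signPow ε (n - z.1 - z.2) * invPow q (n - z.1 - z.2) *
      (invPow i z.1 * invPow j z.2)) ∈
        sumsInto (unconditional (ℤ × ℤ)) (coeffSpace (i + (j + q))) := by
  have generator := pi_pow_mul_signPow_mul_invPow_mem_coeffSpace ε (a := 0) (b := q) rfl
  obtain ⟨g, hg, inner⟩ := invPow_mul_comp_sub_mem_sumsInto j generator
  obtain ⟨g', hg', outer⟩ := invPow_mul_comp_sub_mem_sumsInto i hg
  rw [show j + (2 * 0 + q) = j + q by omega] at hg'
  refine ⟨g', hg', Pi.hasSum.2 fun n ↦ ?_⟩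
  have total := (summable_signPow_mul_invPow_sub_sub_mul ε hq i j n).hasSum
  have iterated := total.prod_fiberwise (g := fun y ↦ invPow i y * g (n - y)) fun y ↦
    ((Pi.hasSum.1 inner (n - y)).mul_left (invPow i y)).congr_fun fun x ↦ by ring
  exact (Pi.hasSum.1 outer n).unique iterated ▸ total

/-- Substituting `u = cn - x`, `v = y - c'n` turns a product of two kernels into a triple
convolution evaluated at `(c - c')n`. -/
lemma signPow_mul_invPow_sub_mul_kernels_mem_sumsInto (ε : ℤˣ) {q : ℕ} (hq : 2 ≤ q)
    {F F' : ℤ → ℤ → ℝ} (hF : F ∈ kernelSpace v) (hF' : F' ∈ kernelSpace w) :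
    (fun (z : ℤ × ℤ) n ↦ signPow ε (z.1 - z.2) * invPow q (z.1 - z.2) * (F z.1 n * F' z.2 n)) ∈
      sumsInto (unconditional (ℤ × ℤ)) (coeffSpace (q + (v + w))) := by
  let B : (ℤ → ℤ → ℝ) →ₗ[ℚ] (ℤ → ℤ → ℝ) →ₗ[ℚ] (ℤ × ℤ → ℤ → ℝ) :=
    LinearMap.mk₂ ℚ (fun F F' z n ↦
      signPow ε (z.1 - z.2) * invPow q (z.1 - z.2) * (F z.1 n * F' z.2 n))
      (fun _ _ _ ↦ by ext; simp only [Pi.add_apply]; ring)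
      (fun _ _ _ ↦ by ext; simp only [Pi.smul_apply, Rat.smul_def]; ring)
      (fun _ _ _ ↦ by ext; simp only [Pi.add_apply]; ring)
      (fun _ _ _ ↦ by ext; simp only [Pi.smul_apply, Rat.smul_def]; ring)
  suffices Submodule.map₂ B (kernelSpace v) (kernelSpace w) ≤
      sumsInto (unconditional (ℤ × ℤ)) (coeffSpace (q + (v + w))) from
    Submodule.map₂_le.1 this F hF F' hF'
  rw [kernelSpace, kernelSpace, Submodule.map₂_span_span, Submodule.span_le]
  rintro _ ⟨_, ⟨a, i, k, ha, rfl, rfl⟩, _, ⟨b, j, k', hb, rfl, rfl⟩, rfl⟩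
  obtain ⟨g, hg, hsum⟩ := signPow_mul_invPow_sub_sub_mul_mem_sumsInto ε hq i j
  have value := (coeffSpace _).smul_mem ((-1) ^ j)
    (invPow_mul_comp_mul_mem_coeffSpace hg (c := a + b) (by omega) (k - k'))
  rw [show a + b + (i + (j + q)) = q + (a + i + (b + j)) by ring] at value
  refine ⟨_, value, Pi.hasSum.2 fun n ↦ ?_⟩
  let substitution : ℤ × ℤ ≃ ℤ × ℤ := (Equiv.subLeft (k * n)).prodCongr (Equiv.subRight (k' * n))
  refine hasSum_congr_of_eq ((substitution.hasSum_iff.2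
    (Pi.hasSum.1 hsum ((k - k') * n))).mul_left ((-1) ^ j * invPow (a + b) n)) (fun ⟨x, y⟩ ↦ ?_) ?_
  · have difference : (k - k') * n - (k * n - x) - (y - k' * n) = x - y := by ring
    have reflection : invPow j (k' * n - y) = (-1) ^ j * invPow j (y - k' * n) := by
      rw [← invPow_neg, neg_sub]
    simp only [B, LinearMap.mk₂_apply, substitution, Function.comp_apply, Equiv.prodCongr_apply,
      Prod.map_apply, Equiv.subLeft_apply, Equiv.subRight_apply, difference, reflection,
      ← invPow_mul_invPow ha hb]
    ring
  · simp only [Pi.smul_apply, Rat.smul_def, Rat.cast_pow, Rat.cast_neg, Rat.cast_one]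
    ring

end Convolution

/-- The real numbers of weight `w` in the span over `ℚ` of the products `π²ᵃ ζ(b)` with `b ≥ 2`
and `2a + b = w`. -/
noncomputable def zetaSpace (w : ℕ) : Submodule ℚ ℝ :=
  Submodule.span ℚ {x | ∃ a b : ℕ, 2 ≤ b ∧ 2 * a + b = w ∧ x = π ^ (2 * a) * (riemannZeta b).re}

section ZetaSpace

variable {w : ℕ}

lemma exists_eq_mul_pi_pow_of_mem_zetaSpace (hw : Even w) {x : ℝ} (hx : x ∈ zetaSpace w) :
    ∃ r : ℚ, x = r * π ^ w := by
  suffices zetaSpace w ≤ Submodule.span ℚ {π ^ w} by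
    obtain ⟨r, rfl⟩ := Submodule.mem_span_singleton.1 (this hx)
    exact ⟨r, Rat.smul_def r _⟩
  refine Submodule.span_le.2 ?_
  rintro _ ⟨a, b, hb, rfl, rfl⟩
  obtain ⟨k, rfl⟩ := even_iff_exists_two_mul.1
    ((Nat.even_add.1 hw).1 (even_two_mul a))
  obtain ⟨r, hr⟩ := exists_re_riemannZeta_two_mul_eq (k := k) (by omega)
  refine Submodule.mem_span_singleton.2 ⟨r, ?_⟩
  rw [hr, Rat.smul_def, pow_add]
  ring

lemma re_riemannZeta_natCast_mem_adjoin {b : ℕ} (hb : 2 ≤ b) :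
    (riemannZeta b).re ∈ Algebra.adjoin ℚ zetaValues :=
  Algebra.subset_adjoin ⟨b, hb, ofReal_re_riemannZeta_natCast hb⟩

lemma pi_sq_mem_adjoin_zetaValues : π ^ 2 ∈ Algebra.adjoin ℚ zetaValues := by
  have zeta_two : (riemannZeta (2 : ℕ)).re = π ^ 2 / 6 := by
    rw [Nat.cast_ofNat, riemannZeta_two]
    norm_cast
  convert Subalgebra.smul_mem _ (re_riemannZeta_natCast_mem_adjoin le_rfl) (6 : ℚ) using 1
  rw [zeta_two, Rat.smul_def]
  push_cast
  ring

lemma zetaSpace_le_adjoin_zetaValues (w : ℕ) :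
    zetaSpace w ≤ Subalgebra.toSubmodule (Algebra.adjoin ℚ zetaValues) := by
  refine Submodule.span_le.2 ?_
  rintro _ ⟨a, b, hb, rfl, rfl⟩
  rw [pow_mul]
  exact Subalgebra.mul_mem _ (Subalgebra.pow_mem _ pi_sq_mem_adjoin_zetaValues a)
    (re_riemannZeta_natCast_mem_adjoin hb)

lemma invPow_mul_mem_sumsInto_zetaSpace {s : ℕ} (hs : 2 ≤ s) {f : ℤ → ℝ}
    (hf : f ∈ coeffSpace w) :
    (fun n : ℕ ↦ invPow s n * f n) ∈ sumsInto (unconditional ℕ) (zetaSpace (s + w)) := by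
  suffices coeffSpace w ≤ (sumsInto (unconditional ℕ) (zetaSpace (s + w))).comap
      (LinearMap.pi fun n : ℕ ↦ invPow s n • LinearMap.proj (n : ℤ)) from this hf
  refine Submodule.span_le.2 ?_
  rintro _ ⟨ε, a, b, rfl, rfl⟩
  rcases eq_or_ne b 0 with rfl | hb
  · refine ⟨0, Submodule.zero_mem _, hasSum_congr_of_eq hasSum_zero (fun n ↦ ?_) rfl⟩
    rcases eq_or_ne n 0 with rfl | hn
    · simp [invPow_apply_zero (show s ≠ 0 by omega)]
    · simp [invPow_zero, hn]
  · obtain ⟨q, hsum⟩ := exists_hasSum_signPow_mul_invPow_natCast ε (r := s + b) (by omega)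
    refine ⟨_, (zetaSpace _).smul_mem q
      (Submodule.subset_span ⟨a, s + b, by omega, by omega, rfl⟩),
      hasSum_congr_of_eq (hsum.mul_left (π ^ (2 * a))) (fun n ↦ ?_) ?_⟩
    · simp only [LinearMap.pi_apply, LinearMap.smul_apply, LinearMap.coe_proj, Function.eval,
        smul_eq_mul, ← invPow_mul_invPow (show s ≠ 0 by omega) hb]
      ring
    · rw [Rat.smul_def]
      ring

end ZetaSpace

/-- The indicator function of the even integers, which encodes the condition `l ≡ n (mod 2)`. -/
noncomputable def evenIndicator (u : ℤ) : ℝ := if Even u then 1 else 0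

lemma evenIndicator_eq (u : ℤ) : evenIndicator u = 2⁻¹ * (1 + signPow (-1) u) := by
  rw [evenIndicator, signPow_neg_one]
  split_ifs <;> norm_num

lemma abs_evenIndicator_le_one (u : ℤ) : |evenIndicator u| ≤ 1 := by
  unfold evenIndicator
  split_ifs <;> simp

lemma evenIndicator_eq_of_even_sub {u v : ℤ} (h : Even (u - v)) :
    evenIndicator u = evenIndicator v := by
  simp only [evenIndicator, Int.even_sub.1 h]

/-- With `d = a - b`, `x = a - c`, `y = a - e`, the integers `d, x, y, x - y, d - x, d - y` are up
to sign the positive roots of `A₃` evaluated at `(a, b, c, e)`. The root `x - y` carries the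
exponent `q`, the others the exponent `p`. Terms with a vanishing root are `0` if `p, q ≥ 1`. -/
noncomputable def rootSummand (q p : ℕ) (z : ℕ × ℤ × ℤ) : ℝ :=
  evenIndicator (z.2.1 - z.2.2 - z.1) * invPow q (z.2.1 - z.2.2) *
    (invPow p z.1 * ((invPow p z.2.1 * invPow p (z.1 - z.2.1)) *
      (invPow p z.2.2 * invPow p (z.1 - z.2.2))))

section RootSummand

variable {p q : ℕ}

lemma evenIndicator_mul_mem_sumsInto {v w : ℕ} (hq : 2 ≤ q) {F F' : ℤ → ℤ → ℝ}
    (hF : F ∈ kernelSpace v) (hF' : F' ∈ kernelSpace w) :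
    (fun (z : ℤ × ℤ) d ↦ evenIndicator (z.1 - z.2 - d) * invPow q (z.1 - z.2) *
      (F z.1 d * F' z.2 d)) ∈ sumsInto (unconditional (ℤ × ℤ)) (coeffSpace (q + (v + w))) := by
  obtain ⟨g, hg, hsum⟩ := signPow_mul_invPow_sub_mul_kernels_mem_sumsInto 1 hq hF hF'
  obtain ⟨g', hg', hsum'⟩ := signPow_mul_invPow_sub_mul_kernels_mem_sumsInto (-1) hq hF hF'
  refine ⟨_, (coeffSpace _).smul_mem 2⁻¹
    ((coeffSpace _).add_mem hg (signPow_mul_mem_coeffSpace hg' (-1))),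
    hasSum_congr_of_eq ((hsum.add (hsum'.mul_left (signPow (-1)))).const_smul (2⁻¹ : ℚ))
      (fun z ↦ ?_) rfl⟩
  ext d
  simp only [evenIndicator_eq, signPow_sub _ _ d, signPow_one, one_mul, Pi.smul_apply, Pi.add_apply,
    Pi.mul_apply, smul_add, Rat.smul_def, Rat.cast_inv, Rat.cast_ofNat]
  ring

lemma summable_rootSummand (hp : 2 ≤ p) (q : ℕ) : Summable (rootSummand q p) := by
  have dominating : Summable fun z : ℕ × ℤ × ℤ ↦
      invPow 2 z.1 * (invPow 2 z.2.1 * invPow 2 z.2.2) :=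
    (summable_invPow_two.comp_injective Nat.cast_injective).mul_of_nonneg
      (summable_invPow_two.mul_of_nonneg summable_invPow_two invPow_two_nonneg invPow_two_nonneg)
      (fun n ↦ invPow_two_nonneg n) fun z ↦ mul_nonneg (invPow_two_nonneg _) (invPow_two_nonneg _)
  refine .of_norm_bounded dominating fun z ↦ ?_
  have bound (u v : ℤ) : |invPow p u| * |invPow p v| ≤ invPow 2 u :=
    (mul_le_of_le_one_right (abs_nonneg _) (abs_invPow_le_one p v)).trans
      (abs_invPow_le_invPow_two hp u)
  simp only [rootSummand, Real.norm_eq_abs, abs_mul]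
  refine (mul_le_of_le_one_left (by positivity) (mul_le_one₀ (abs_evenIndicator_le_one _)
    (abs_nonneg _) (abs_invPow_le_one q _))).trans ?_
  exact mul_le_mul (abs_invPow_le_invPow_two hp _) (mul_le_mul (bound _ _) (bound _ _)
    (by positivity) (invPow_two_nonneg _)) (by positivity) (invPow_two_nonneg _)

lemma tsum_rootSummand_mem_zetaSpace (hq : 2 ≤ q) (hp : 2 ≤ p) :
    ∑' z, rootSummand q p z ∈ zetaSpace (q + 5 * p) := by
  have kernel := ite_invPow_mul_invPow_sub_mem_kernelSpace (i := p) (j := p) (by omega) (by omega)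
  obtain ⟨g, hg, inner⟩ := evenIndicator_mul_mem_sumsInto hq kernel kernel
  obtain ⟨c, hc, outer⟩ := invPow_mul_mem_sumsInto_zetaSpace hp hg
  have iterated := (summable_rootSummand hp q).hasSum.prod_fiberwise
    (g := fun d : ℕ ↦ invPow p d * g d) fun d ↦
      ((Pi.hasSum.1 inner d).mul_left (invPow p d)).congr_fun fun z ↦ ?_
  · rw [iterated.unique outer]
    convert hc using 2
    ring
  · rcases eq_or_ne d 0 with rfl | hd
    · simp [rootSummand, invPow_apply_zero (show p ≠ 0 by omega)]
    · simp only [rootSummand, Nat.cast_eq_zero, hd, if_false]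
      ring

end RootSummand

/-- The product of the six roots of `A₃`, up to sign, in the coordinates of `rootSummand`. -/
def disc (z : ℕ × ℤ × ℤ) : ℤ :=
  z.1 * ((z.2.1 - z.2.2) * (z.2.1 * (z.1 - z.2.1) * (z.2.2 * (z.1 - z.2.2))))

/-- The product of the six positive roots of `A₃` at the point whose simple roots take the values
`l + 1, m + 1, n + 1`. -/
def rootProd : ℕ × ℕ × ℕ → ℤ
  | (l, m, n) => (l + 1) * (m + 1) * (n + 1) * (l + m + 2) * (m + n + 2) * (l + m + n + 3)

/-- The Weyl chambers of `A₃` on which `d > 0` and `y < x`, in the coordinates of `rootSummand`.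
Each is parametrized by the positive values `l + 1, m + 1, n + 1` of its simple roots. -/
def chamber : Fin 6 → ℕ × ℕ × ℕ → ℕ × ℤ × ℤ
  | 0, (l, m, n) => (n + 1, l + m + n + 3, m + n + 2)
  | 1, (l, m, n) => (m + n + 2, l + m + n + 3, n + 1)
  | 2, (l, m, n) => (m + 1, l + m + 2, -(n + 1))
  | 3, (l, m, n) => (l + m + n + 3, m + n + 2, n + 1)
  | 4, (l, m, n) => (l + m + 2, m + 1, -(n + 1))
  | 5, (l, m, n) => (l + 1, -(m + 1), -(m + n + 2))

/-- The sign of `disc` on the given chamber. -/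
def chamberSign : Fin 6 → ℤ
  | 0 | 2 | 3 | 5 => 1
  | 1 | 4 => -1

lemma disc_chamber (i : Fin 6) (t : ℕ × ℕ × ℕ) :
    disc (chamber i t) = chamberSign i * rootProd t := by
  match i with
  | 0 | 1 | 2 | 3 | 4 | 5 =>
    simp only [disc, chamber, chamberSign, rootProd]
    push_cast
    ring

lemma chamber_injective : (fun v : Fin 6 × ℕ × ℕ × ℕ ↦ chamber v.1 v.2).Injective := by
  rintro ⟨i, a, b, c⟩ ⟨j, a', b', c'⟩ h
  fin_cases i <;> fin_cases j <;> simp [chamber] at h ⊢ <;> omega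

lemma summable_comp_chamber {f : ℕ × ℤ × ℤ → ℝ} (hf : Summable f) (i : Fin 6) :
    Summable fun t ↦ f (chamber i t) :=
  hf.comp_injective (chamber_injective.comp (Prod.mk_right_injective i))

lemma chamber_lt (i : Fin 6) (t : ℕ × ℕ × ℕ) : (chamber i t).2.2 < (chamber i t).2.1 := by
  match i with
  | 0 | 1 | 2 | 3 | 4 | 5 =>
    simp only [chamber]
    omega

lemma exists_chamber_eq {z : ℕ × ℤ × ℤ} (hz : disc z ≠ 0) (hlt : z.2.2 < z.2.1) :
    ∃ i t, chamber i t = z := by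
  obtain ⟨d, x, y⟩ := z
  simp only [disc, mul_ne_zero_iff, sub_ne_zero] at hz hlt
  obtain ⟨hd, -, ⟨hx, hdx⟩, hy, hdy⟩ := hz
  rcases lt_or_gt_of_ne hdx with hdx | hdx
  · rcases lt_or_gt_of_ne hdy with hdy | hdy
    · exact ⟨0, ((x - y - 1).toNat, (y - d - 1).toNat, d - 1), by
        simp only [chamber, Prod.mk.injEq]
        omega⟩
    rcases lt_or_gt_of_ne hy with hy | hy
    · exact ⟨2, ((x - d - 1).toNat, d - 1, (-y - 1).toNat), by
        simp only [chamber, Prod.mk.injEq]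
        omega⟩
    · exact ⟨1, ((x - d - 1).toNat, (d - y - 1).toNat, (y - 1).toNat), by
        simp only [chamber, Prod.mk.injEq]
        omega⟩
  · rcases lt_or_gt_of_ne hx with hx | hx
    · exact ⟨5, (d - 1, (-x - 1).toNat, (x - y - 1).toNat), by
        simp only [chamber, Prod.mk.injEq]
        omega⟩
    rcases lt_or_gt_of_ne hy with hy | hy
    · exact ⟨4, ((d - x - 1).toNat, (x - 1).toNat, (-y - 1).toNat), by
        simp only [chamber, Prod.mk.injEq]
        omega⟩
    · exact ⟨3, ((d - x - 1).toNat, (x - y - 1).toNat, (y - 1).toNat), by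
        simp only [chamber, Prod.mk.injEq]
        omega⟩

lemma tsum_eq_two_mul_tsum_sum_chamber {f : ℕ × ℤ × ℤ → ℝ} (hf : Summable f)
    (hswap : ∀ d x y, f (d, y, x) = f (d, x, y)) (hdisc : ∀ z, disc z = 0 → f z = 0) :
    ∑' z, f z = 2 * ∑' t, ∑ i, f (chamber i t) := by
  set g : ℕ × ℤ × ℤ → ℝ := {z | z.2.2 < z.2.1}.indicator f
  set swap : ℕ × ℤ × ℤ ≃ ℕ × ℤ × ℤ := (Equiv.refl ℕ).prodCongr (Equiv.prodComm ℤ ℤ)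
  have summable_g : Summable g := hf.indicator _
  have f_eq (z : ℕ × ℤ × ℤ) : f z = g z + g (swap z) := by
    obtain ⟨d, x, y⟩ := z
    rcases lt_trichotomy x y with h | rfl | h
    · simp [g, swap, h, h.not_gt, hswap]
    · simp [g, swap, hdisc (d, x, x) (by simp [disc])]
    · simp [g, swap, h, h.not_gt]
  have g_chamber (i : Fin 6) (t : ℕ × ℕ × ℕ) : g (chamber i t) = f (chamber i t) :=
    Set.indicator_of_mem (s := {z | z.2.2 < z.2.1}) (chamber_lt i t) f
  have support_g : g.support ⊆ Set.range fun v : Fin 6 × ℕ × ℕ × ℕ ↦ chamber v.1 v.2 := by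
    intro z hz
    obtain ⟨hlt, hfz⟩ := Set.indicator_apply_ne_zero.1 hz
    obtain ⟨i, t, rfl⟩ := exists_chamber_eq (mt (hdisc z) hfz) hlt
    exact ⟨(i, t), rfl⟩
  calc ∑' z, f z = 2 * ∑' z, g z :=
        (hasSum_congr_of_eq (summable_g.hasSum.add (swap.hasSum_iff.2 summable_g.hasSum)) f_eq
          (two_mul _)).tsum_eq
    _ = 2 * ∑' v : Fin 6 × ℕ × ℕ × ℕ, g (chamber v.1 v.2) := by
        rw [chamber_injective.tsum_eq support_g]
    _ = 2 * ∑ i, ∑' t, f (chamber i t) := by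
        simp only [g_chamber]
        exact congrArg (2 * ·) ((hf.comp_injective chamber_injective).tsum_prod.trans
          (tsum_fintype _))
    _ = 2 * ∑' t, ∑ i, f (chamber i t) := by
        rw [Summable.tsum_finsetSum fun i _ ↦ summable_comp_chamber hf i]

/-- The summand of `ζ₃(p, …, p; SO(6))`, with `l, m, n` as in `rootProd`. -/
noncomputable def rootTerm (p : ℕ) (t : ℕ × ℕ × ℕ) : ℝ :=
  evenIndicator (t.1 - t.2.2) * invPow p (rootProd t)

section RootTerm

variable {q : ℕ}

lemma ZSO6r_eq_tsum_rootTerm (hq : q ≠ 0) (e : ℕ) :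
    ZSO6r q (q + e) (q + e) (q + e) (q + e) (q + e) =
      ∑' t : ℕ × ℕ × ℕ, (t.1 + 1 : ℝ) ^ e * rootTerm (q + e) t := by
  refine tsum_congr fun ⟨a, b, c⟩ ↦ ?_
  have parity : (a + 1) % 2 = (c + 1) % 2 ↔ Even (a - c : ℤ) := by
    rw [Int.even_iff]
    omega
  rw [rootTerm, evenIndicator, invPow_of_ne_zero (by omega)]
  simp only [parity, rootProd, inv_pow]
  push_cast
  rw [show (a + 1 + (b + 1) : ℝ) = a + b + 2 by ring,
    show (b + 1 + (c + 1) : ℝ) = b + c + 2 by ring,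
    show (a + b + 2 + (c + 1) : ℝ) = a + b + c + 3 by ring]
  simp only [mul_pow, pow_add _ q e]
  field_simp

lemma rootSummand_eq_mul_invPow_disc (hq : q ≠ 0) (e : ℕ) (z : ℕ × ℤ × ℤ) :
    rootSummand q (q + e) z = evenIndicator (z.2.1 - z.2.2 - z.1) *
      (((z.2.1 - z.2.2 : ℤ) : ℝ) ^ e * invPow (q + e) (disc z)) := by
  have he : q + e ≠ 0 := by omega
  simp only [rootSummand, disc, invPow_mul he, invPow_eq_pow_mul hq e (z.2.1 - z.2.2)]
  ring

lemma rootSummand_chamber (hq : q ≠ 0) (e : ℕ) (i : Fin 6) (t : ℕ × ℕ × ℕ) :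
    rootSummand q (q + e) (chamber i t) = invPow (q + e) (chamberSign i) *
      (((chamber i t).2.1 - (chamber i t).2.2 : ℤ) : ℝ) ^ e * rootTerm (q + e) t := by
  have parity : Even ((chamber i t).2.1 - (chamber i t).2.2 - (chamber i t).1 -
      (t.1 - t.2.2 : ℤ)) := by
    rw [Int.even_iff]
    obtain ⟨l, m, n⟩ := t
    match i with
    | 0 | 1 | 2 | 3 | 4 | 5 =>
      simp only [chamber]
      omega
  rw [rootSummand_eq_mul_invPow_disc hq, rootTerm, disc_chamber, invPow_mul (by omega),
    evenIndicator_eq_of_even_sub parity]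
  ring

/-- The reversal of a triple, which is the automorphism of the Dynkin diagram `A₃` in the
coordinates `(l, m, n)`. -/
def tripleReverse : ℕ × ℕ × ℕ ≃ ℕ × ℕ × ℕ where
  toFun t := (t.2.2, t.2.1, t.1)
  invFun t := (t.2.2, t.2.1, t.1)
  left_inv _ := rfl
  right_inv _ := rfl

lemma rootTerm_tripleReverse (p : ℕ) (t : ℕ × ℕ × ℕ) :
    rootTerm p (tripleReverse t) = rootTerm p t := by
  have parity : Even (t.2.2 - t.1 - (t.1 - t.2.2 : ℤ)) := by
    rw [Int.even_iff]
    omega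
  have rootProd_eq : rootProd (tripleReverse t) = rootProd t := by
    simp only [rootProd, tripleReverse, Equiv.coe_fn_mk]
    ring
  rw [rootTerm, rootTerm, rootProd_eq]
  exact congrArg (· * _) (evenIndicator_eq_of_even_sub parity)

lemma tsum_rootSummand_eq (hq : Even q) {e : ℕ} (hq0 : q ≠ 0) (hqe : 2 ≤ q + e) :
    ∑' z, rootSummand q (q + e) z = 2 * ∑' t, ∑ i, rootSummand q (q + e) (chamber i t) := by
  refine tsum_eq_two_mul_tsum_sum_chamber (summable_rootSummand hqe q) (fun d x y ↦ ?_)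
    fun z hz ↦ ?_
  · have parity : Even (y - x - d - (x - y - d : ℤ)) := by
      rw [Int.even_iff]
      omega
    rw [rootSummand, rootSummand, evenIndicator_eq_of_even_sub parity, ← neg_sub x y,
      invPow_neg, hq.neg_one_pow]
    ring
  · rw [rootSummand_eq_mul_invPow_disc hq0, hz, invPow_apply_zero (by omega), mul_zero, mul_zero]

lemma tsum_rootSummand_self (hq : Even q) (hq2 : 2 ≤ q) :
    ∑' z, rootSummand q q z = 12 * ZSO6r q q q q q q := by
  have hq0 : q ≠ 0 := by omega
  have sum_chambers (t : ℕ × ℕ × ℕ) :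
      ∑ i, rootSummand q (q + 0) (chamber i t) = 6 * rootTerm (q + 0) t := by
    simp only [rootSummand_chamber hq0, pow_zero, mul_one, ← Finset.sum_mul]
    congr 1
    simp only [add_zero, Fin.sum_univ_six, chamberSign, invPow_of_ne_zero hq0, Int.cast_neg,
      Int.cast_one, inv_pow, hq.neg_pow]
    norm_num
  calc ∑' z, rootSummand q q z = 2 * ∑' t, ∑ i, rootSummand q (q + 0) (chamber i t) :=
        tsum_rootSummand_eq hq (e := 0) hq0 hq2
    _ = 12 * ∑' t : ℕ × ℕ × ℕ, (t.1 + 1 : ℝ) ^ 0 * rootTerm (q + 0) t := by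
        simp only [sum_chambers, tsum_mul_left, pow_zero, one_mul]
        ring
    _ = 12 * ZSO6r q q q q q q := by rw [← ZSO6r_eq_tsum_rootTerm hq0 0, add_zero]

lemma tsum_rootSummand_succ (hq : Even q) (hq0 : q ≠ 0) :
    ∑' z, rootSummand q (q + 1) z =
      4 * ZSO6r q (q + 1) (q + 1) (q + 1) (q + 1) (q + 1) := by
  have sum_chambers (t : ℕ × ℕ × ℕ) : ∑ i, rootSummand q (q + 1) (chamber i t) =
      (t.1 + 1 : ℝ) * rootTerm (q + 1) t + (t.2.2 + 1 : ℝ) * rootTerm (q + 1) t := by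
    simp only [rootSummand_chamber hq0, ← Finset.sum_mul, ← add_mul]
    congr 1
    simp only [Fin.sum_univ_six, chamber, chamberSign, invPow_of_ne_zero q.add_one_ne_zero,
      Int.cast_neg, Int.cast_one, inv_pow, hq.add_one.neg_pow, one_pow, inv_neg, inv_one]
    push_cast
    ring
  have sum_left : HasSum (fun t : ℕ × ℕ × ℕ ↦ (t.1 + 1 : ℝ) * rootTerm (q + 1) t)
      (∑' t : ℕ × ℕ × ℕ, (t.1 + 1 : ℝ) * rootTerm (q + 1) t) := by
    refine ((summable_comp_chamber (summable_rootSummand (p := q + 1) (by omega) q) 0).congr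
      fun t ↦ ?_).hasSum
    have root_eq : (((chamber 0 t).2.1 - (chamber 0 t).2.2 : ℤ) : ℝ) = t.1 + 1 := by
      simp only [chamber]
      push_cast
      ring
    rw [rootSummand_chamber hq0, root_eq]
    simp [chamberSign, invPow_of_ne_zero]
  have sum_right : HasSum (fun t : ℕ × ℕ × ℕ ↦ (t.2.2 + 1 : ℝ) * rootTerm (q + 1) t)
      (∑' t : ℕ × ℕ × ℕ, (t.1 + 1 : ℝ) * rootTerm (q + 1) t) :=
    (tripleReverse.hasSum_iff.2 sum_left).congr_fun fun t ↦ by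
      rw [Function.comp_apply, rootTerm_tripleReverse]
      rfl
  rw [tsum_rootSummand_eq hq hq0 (by omega), tsum_congr sum_chambers,
    (sum_left.add sum_right).tsum_eq, ZSO6r_eq_tsum_rootTerm hq0]
  simp only [pow_one]
  ring

lemma ZSO6r_self_mem_zetaSpace (hq : Even q) (hq2 : 2 ≤ q) :
    ZSO6r q q q q q q ∈ zetaSpace (6 * q) := by
  have weight : q + 5 * q = 6 * q := by ring
  convert (zetaSpace _).smul_mem (12⁻¹ : ℚ)
    (weight ▸ tsum_rootSummand_mem_zetaSpace hq2 hq2) using 1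
  rw [tsum_rootSummand_self hq hq2, Rat.smul_def]
  push_cast
  ring

lemma ZSO6r_succ_mem_zetaSpace (hq : Even q) (hq2 : 2 ≤ q) :
    ZSO6r q (q + 1) (q + 1) (q + 1) (q + 1) (q + 1) ∈ zetaSpace (q + 5 * (q + 1)) := by
  convert (zetaSpace _).smul_mem (4⁻¹ : ℚ)
    (tsum_rootSummand_mem_zetaSpace hq2 (p := q + 1) (by omega)) using 1
  rw [tsum_rootSummand_succ hq (by omega), Rat.smul_def]
  push_cast
  ring

end RootTerm

/-- Proposition 6.2 of Komori–Matsumoto–Tsumura: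
`ζ₃((2k,…,2k);SO(6)) ∈ ℚ·π^{12k}` and
`ζ₃((2k,2k+1,…,2k+1);SO(6))` lies in the `ℚ`-algebra generated by Riemann
zeta values. -/
theorem SO6_values (k : ℕ) (hk : 0 < k) :
    (∃ r : ℚ, ZSO6r (2 * k) (2 * k) (2 * k) (2 * k) (2 * k) (2 * k) =
        (r : ℝ) * π ^ (12 * k)) ∧
      ZSO6r (2 * k) (2 * k + 1) (2 * k + 1) (2 * k + 1) (2 * k + 1) (2 * k + 1) ∈
        Algebra.adjoin ℚ zetaValues := by
  have weight : 6 * (2 * k) = 12 * k := by ring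
  constructor
  · exact weight ▸ exists_eq_mul_pi_pow_of_mem_zetaSpace ((even_two_mul k).mul_left 6)
      (ZSO6r_self_mem_zetaSpace (even_two_mul k) (by omega))
  · exact zetaSpace_le_adjoin_zetaValues _ (ZSO6r_succ_mem_zetaSpace (even_two_mul k) (by omega))
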